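/- Let G ∈ F_q^{m×n} be triorthogonal with parameter k. For u ∈ F_q^k define the (unnormalised) encoded computational basis state v_u : (Fin n → F_q) → ℂ by v_u(x) = 1 if x − Σ_{a=1}^k u_a g^a ∈ 𝒢_0 and v_u(x) = 0 otherwise, and let D be the diagonal operator on functions ψ : (Fin n → F_q) → ℂ given by (Dψ)(x) = ε(tr(Σ_{i=1}^n x_i^7)) · ψ(x). Then for every u ∈ F_q^k, D v_u = ε(tr(Σ_{a=1}^k u_a^7)) · v_u; i.e. the transversal gate U_1^{(7)}⊗…⊗U_1^{(7)} acts on encoded basis states exactly as the encoded transversal gate. -/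

import Mathlib

open scoped Classical

noncomputable section

/-- A matrix `G ∈ F^{m×n}` (rows `G a`) is *triorthogonal* with parameter `k`
and weights `σ : Fin n → F`, `τ : Fin k → F` (all nonzero) if
(i) `∑ i, (G a i)^4 (G b i)^2 (G c i)` is `1` when `a = b = c` is among the first `k`
rows and `0` otherwise, and
(ii) `∑ i, σ i * G a i * G b i` is `τ a` when `a = b` is among the first `k` rows and
`0` otherwise. -/
def IsTriorthogonal {F : Type} [Field F] {m n k : ℕ} (G : Fin m → Fin n → F)
    (σ : Fin n → F) (τ : Fin k → F) : Prop :=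
  (∀ i, σ i ≠ 0) ∧ (∀ a, τ a ≠ 0) ∧
  (∀ a b c : Fin m, ∑ i, (G a i) ^ 4 * (G b i) ^ 2 * (G c i) =
      if a = b ∧ b = c ∧ (a : ℕ) < k then 1 else 0) ∧
  (∀ a b : Fin m, ∑ i, σ i * G a i * G b i =
      if h : a = b ∧ (a : ℕ) < k then τ ⟨(a : ℕ), h.2⟩ else 0)

/-- The trace map `tr : F_{2^s} → F_2 ⊆ F_{2^s}`, `tr γ = Σ_{i=0}^{s-1} γ^{2^i}`
(its values lie in the prime field `{0, 1}`). -/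
def trF {F : Type} [Field F] (s : ℕ) (x : F) : F := ∑ i ∈ Finset.range s, x ^ 2 ^ i

/-- `ε ∘ tr : F_{2^s} → ℂ`, where `ε 0 = 1` and `ε 1 = -1` on the prime field `F_2`. -/
def epsTr {F : Type} [Field F] (s : ℕ) (x : F) : ℂ := if trF s x = 0 then 1 else -1

/-!
In characteristic `2` squaring is additive, so the form `∑ i, x i ^ 4 * y i ^ 2 * z i` is additive
in each variable and semilinear, and it restricts to `∑ i, x i ^ 7` on the diagonal.
Triorthogonality makes the rows of `G` orthogonal for this form, so the septic sum of a codeword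
`∑ a, w a • G a` depends only on its first `k` coefficients, which `x - ∑ a, u a • G a ∈ 𝒢₀`
fixes to be `u`.
-/

section SepticForm

variable {R ι X : Type*} [CommSemiring R] [Fintype ι] [Fintype X]

/-- The polarization `∑ i, x i ^ 4 * y i ^ 2 * z i` of the sum of seventh powers, splitting `7` as
`4 + 2 + 1`; condition (i) of triorthogonality prescribes its values on the rows of a matrix. -/
def septicForm (x y z : X → R) : R := ∑ i, x i ^ 4 * y i ^ 2 * z i

theorem septicForm_self (x : X → R) : septicForm x x x = ∑ i, x i ^ 7 :=
  Finset.sum_congr rfl fun i _ => by ring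

theorem septicForm_sum_smul [CharP R 2] {κ μ : Type*} [Fintype κ] [Fintype μ] (u : ι → R)
    (v : κ → R) (w : μ → R) (x : ι → X → R) (y : κ → X → R) (z : μ → X → R) :
    septicForm (∑ a, u a • x a) (∑ b, v b • y b) (∑ c, w c • z c) =
      ∑ a, ∑ b, ∑ c, u a ^ 4 * v b ^ 2 * w c * septicForm (x a) (y b) (z c) := by
  have sum_sq (f : κ → R) : (∑ b, f b) ^ 2 = ∑ b, f b ^ 2 := sum_pow_char 2 _ f
  have sum_fourth (f : ι → R) : (∑ a, f a) ^ 4 = ∑ a, f a ^ 4 := sum_pow_char_pow 2 2 _ f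
  calc
    _ = ∑ i, ∑ a, ∑ b, ∑ c, u a ^ 4 * v b ^ 2 * w c * (x a i ^ 4 * y b i ^ 2 * z c i) := by
      simp only [septicForm, Finset.sum_apply, Pi.smul_apply, smul_eq_mul, sum_sq, sum_fourth,
        mul_pow]
      refine Finset.sum_congr rfl fun i _ => ?_
      rw [Finset.sum_mul_sum]
      simp_rw [Finset.sum_mul, Finset.mul_sum, mul_mul_mul_comm]
    _ = _ := by
      simp only [septicForm, Finset.mul_sum]
      rw [Finset.sum_comm]
      refine Finset.sum_congr rfl fun a _ => ?_
      rw [Finset.sum_comm]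
      exact Finset.sum_congr rfl fun b _ => Finset.sum_comm

theorem sum_pow_seven_of_septicForm_diagonal [CharP R 2] [DecidableEq ι] {g : ι → X → R} {d : ι → R}
    (hg : ∀ a b c, septicForm (g a) (g b) (g c) = if a = b ∧ b = c then d a else 0) (w : ι → R) :
    ∑ i, (∑ a, w a • g a) i ^ 7 = ∑ a, w a ^ 7 * d a := by
  rw [← septicForm_self, septicForm_sum_smul]
  simp only [hg, ite_and, mul_ite, mul_zero, Finset.sum_ite_eq, Finset.mem_univ, if_true,
    Finset.sum_ite_irrel, Finset.sum_const_zero]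
  exact Finset.sum_congr rfl fun a _ => by ring

end SepticForm

section Codewords

variable {R M : Type*} {m k : ℕ}

theorem sum_univ_eq_sum_castLE_add_sum [AddCommMonoid M] (hkm : k ≤ m) (f : Fin m → M) :
    ∑ a, f a = ∑ a, f (Fin.castLE hkm a) + ∑ b : Fin (m - k), f ⟨k + b, by omega⟩ := by
  rw [← Fin.sum_congr' f (Nat.add_sub_of_le hkm), Fin.sum_univ_add]
  rfl

theorem exists_eq_sum_smul_of_sub_mem_span [Semiring R] [AddCommGroup M] [Module R M]
    (hkm : k ≤ m) {g : Fin m → M} {u : Fin k → R} {x : M}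
    (hx : x - ∑ a, u a • g (Fin.castLE hkm a) ∈
      Submodule.span R (Set.range fun b : Fin (m - k) => g ⟨k + b, by omega⟩)) :
    ∃ w : Fin m → R, (∀ a, w (Fin.castLE hkm a) = u a) ∧ x = ∑ a, w a • g a := by
  obtain ⟨c, hc⟩ := (Submodule.mem_span_range_iff_exists_fun R).1 hx
  let w : Fin m → R := Fin.append u c ∘ Fin.cast (Nat.add_sub_of_le hkm).symm
  have hwu (a : Fin k) : w (Fin.castLE hkm a) = u a := Fin.append_left u c a
  have hwc (b : Fin (m - k)) : w ⟨k + b, by omega⟩ = c b := Fin.append_right u c b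
  refine ⟨w, hwu, ?_⟩
  simp only [sum_univ_eq_sum_castLE_add_sum hkm, hwu, hwc, hc, add_sub_cancel]

end Codewords

section Triorthogonal

variable {R X : Type*} [CommRing R] [CharP R 2] [Fintype X] {m k : ℕ}

theorem sum_pow_seven_eq_of_sub_mem_span (hkm : k ≤ m) {G : Fin m → X → R}
    (hG : ∀ a b c, septicForm (G a) (G b) (G c) =
      if a = b ∧ b = c ∧ (a : ℕ) < k then 1 else 0) {u : Fin k → R} {x : X → R}
    (hx : x - ∑ a, u a • G (Fin.castLE hkm a) ∈
      Submodule.span R (Set.range fun b : Fin (m - k) => G ⟨k + b, by omega⟩)) :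
    ∑ i, x i ^ 7 = ∑ a, u a ^ 7 := by
  obtain ⟨w, hwu, rfl⟩ := exists_eq_sum_smul_of_sub_mem_span hkm hx
  have hdiag (a b c : Fin m) : septicForm (G a) (G b) (G c) =
      if a = b ∧ b = c then (if (a : ℕ) < k then 1 else 0) else 0 := by
    simp only [hG, ite_and]
  rw [sum_pow_seven_of_septicForm_diagonal hdiag, sum_univ_eq_sum_castLE_add_sum hkm]
  simp [hwu]

theorem transversal_gate_acts_on_encoded_basis_general {A : Type*} [MulZeroOneClass A]
    (hkm : k ≤ m) (G : Fin m → X → R)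
    (hG : ∀ a b c, septicForm (G a) (G b) (G c) =
      if a = b ∧ b = c ∧ (a : ℕ) < k then 1 else 0) (χ : R → A) (u : Fin k → R) :
    (fun x : X → R => χ (∑ i, x i ^ 7) *
        (if (x - fun i => ∑ a, u a * G (Fin.castLE hkm a) i) ∈
            Submodule.span R (Set.range fun b : Fin (m - k) => G ⟨k + b, by omega⟩)
          then (1 : A) else 0)) =
    (fun x : X → R => χ (∑ a, u a ^ 7) *
        (if (x - fun i => ∑ a, u a * G (Fin.castLE hkm a) i) ∈
            Submodule.span R (Set.range fun b : Fin (m - k) => G ⟨k + b, by omega⟩)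
          then (1 : A) else 0)) := by
  have encoded_eq : (fun i => ∑ a, u a * G (Fin.castLE hkm a) i) =
      ∑ a, u a • G (Fin.castLE hkm a) := by
    ext i
    simp only [Finset.sum_apply, Pi.smul_apply, smul_eq_mul]
  funext x
  split_ifs with hx
  · rw [encoded_eq] at hx
    rw [sum_pow_seven_eq_of_sub_mem_span hkm hG hx]
  · simp only [mul_zero]

end Triorthogonal

/-- For `G` triorthogonal with parameter `k`: the diagonal operator
`(Dψ)(x) = ε(tr(Σ_i x_i^7)) ψ(x)` acts on the unnormalised encoded basis state
`v_u(x) = [x − Σ_a u_a g^a ∈ 𝒢₀]` as multiplication by `ε(tr(Σ_{a<k} u_a^7))`;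
i.e. the transversal gate `U_1^{(7)} ⊗ ⋯ ⊗ U_1^{(7)}` acts on encoded basis states
exactly as the encoded transversal gate. -/
theorem transversal_gate_acts_on_encoded_basis
    {s m n k : ℕ} (hs : 1 ≤ s) (hk : 1 ≤ k) (hkm : k ≤ m)
    {F : Type} [Field F] [Fintype F] (hF : Fintype.card F = 2 ^ s)
    (G : Fin m → Fin n → F) (σ : Fin n → F) (τ : Fin k → F)
    (hG : IsTriorthogonal G σ τ) (u : Fin k → F) :
    (fun x : Fin n → F => epsTr s (∑ i, x i ^ 7) *
        (if (x - fun i => ∑ a, u a * G (Fin.castLE hkm a) i) ∈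
            Submodule.span F (Set.range fun a : Fin (m - k) => G ⟨k + (a : ℕ), by have := a.2; omega⟩)
          then (1 : ℂ) else 0)) =
    (fun x : Fin n → F => epsTr s (∑ a, u a ^ 7) *
        (if (x - fun i => ∑ a, u a * G (Fin.castLE hkm a) i) ∈
            Submodule.span F (Set.range fun a : Fin (m - k) => G ⟨k + (a : ℕ), by have := a.2; omega⟩)
          then (1 : ℂ) else 0)) := by
  have : CharP F 2 := charP_of_card_eq_prime_pow hF
  exact transversal_gate_acts_on_encoded_basis_general hkm G hG.2.2.1 (epsTr s) u
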